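/- Let H be a linear algebraic group over an algebraically closed field, equipped with an action of a torus A, forming the semidirect product A ⋉ H. Let T be a torus in H such that (i) A centralizes T, so that A × T is a subgroup of A ⋉ H, and (ii) the identity component of the fixed-point group H^{A×T} of the conjugation action of A × T on H equals T. Then T is a maximal torus of H. -/

import Mathlib

open Matrix

variable (k : Type*) [Field k] [IsAlgClosed k] (N : ℕ)

/-- The regular functions on `GL_N`: the coordinates of a matrix together with
those of its inverse. -/
noncomputable def glCoords (g : GL (Fin N) k) :
    ((Fin N × Fin N) ⊕ (Fin N × Fin N)) → k :=
  Sum.elim (fun p => (g : Matrix (Fin N) (Fin N) k) p.1 p.2)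
    (fun p => ((g⁻¹ : GL (Fin N) k) : Matrix (Fin N) (Fin N) k) p.1 p.2)

/-- Zariski-closed subsets of `GL_N(k)`: common zero loci of polynomials in the
matrix entries and the entries of the inverse.  A linear algebraic group over
the algebraically closed field `k` is a Zariski-closed subgroup of some
`GL_N(k)`. -/
def ZClosed (S : Set (GL (Fin N) k)) : Prop :=
  ∃ I : Set (MvPolynomial ((Fin N × Fin N) ⊕ (Fin N × Fin N)) k),
    S = {g | ∀ f ∈ I, MvPolynomial.eval (glCoords k N g) f = 0}

/-- The Zariski topology on `GL_N(k)`. -/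
noncomputable def zTop : TopologicalSpace (GL (Fin N) k) :=
  TopologicalSpace.generateFrom {U | ZClosed k N Uᶜ}

/-- A diagonal element of `GL_N(k)`. -/
def IsDiag (g : GL (Fin N) k) : Prop :=
  ∀ i j : Fin N, i ≠ j → (g : Matrix (Fin N) (Fin N) k) i j = 0

/-- A torus in `GL_N(k)`: a Zariski-closed connected subgroup that is
diagonalizable, i.e. conjugate to a subgroup of the diagonal matrices. -/
def IsTorus (T : Subgroup (GL (Fin N) k)) : Prop :=
  ZClosed k N (T : Set (GL (Fin N) k)) ∧
  @IsPreconnected _ (zTop k N) (T : Set (GL (Fin N) k)) ∧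
  ∃ c : GL (Fin N) k, ∀ t ∈ T, IsDiag k N (c * t * c⁻¹)

/-!
Let `H₁ = C_H(T)`, a closed subgroup normalised by `A` that contains every torus `T' ⊇ T` of `H`.
Let `Y` be a minimal nonempty closed set of flags in `GL_N / B` stable under `A` and `H₁`. By
Borel's fixed point theorem `Y` contains a fixed point of `A`; its `H₁`-orbit is stable under `A`
and locally closed, hence all of `Y` by minimality. As `T'` also fixes a point of `Y`, a conjugate
of `T'` under `H₁` fixes the same flag as `A`. So one may assume that `A` is diagonal and `T'` is
upper triangular.

Multiplying an upper triangular `t ∈ H₁` by commutators `[a, t]` with `a ∈ A` does not change its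
diagonal, and suitable products kill the entries of nonzero `A`-weight. Hence every element of `T'`
has the same diagonal as an element of `C_{H₁}(A) = H^{A × T}`, in which `T` has finite index. An
element of the diagonalizable group `T'` is determined by its diagonal, so `T` has finite index in
`T'`, and `T' = T` because `T'` is connected.
-/

section Centralizer

open Pointwise

variable {G : Type*} [Group G]

lemma smul_centralizer (φ : MulAut G) (A : Subgroup G) :
    φ • Subgroup.centralizer (A : Set G) = Subgroup.centralizer ((φ • A : Subgroup G) : Set G) := by
  have smul_le (ψ : MulAut G) (B : Subgroup G) :
      ψ • Subgroup.centralizer (B : Set G) ≤ Subgroup.centralizer ((ψ • B : Subgroup G) : Set G) :=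
    Subgroup.map_centralizer_le_centralizer_image _ _
  refine (smul_le φ A).antisymm (Subgroup.subset_pointwise_smul_iff.2 ?_)
  simpa using smul_le φ⁻¹ (φ • A)

lemma coe_inf_centralizer_inf_centralizer (H A T : Subgroup G) :
    ((H ⊓ Subgroup.centralizer T ⊓ Subgroup.centralizer A : Subgroup G) : Set G) =
      {h | h ∈ H ∧ ∀ a ∈ A, ∀ t ∈ T, (a * t) * h * (a * t)⁻¹ = h} := by
  ext h
  refine ⟨fun ⟨⟨hH, hT⟩, hA⟩ ↦ ⟨hH, fun a ha t ht ↦ ?_⟩,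
    fun ⟨hH, hfix⟩ ↦ ⟨⟨hH, fun t ht ↦ ?_⟩, fun a ha ↦ ?_⟩⟩
  · rw [mul_inv_eq_iff_eq_mul, mul_assoc, hT t ht, ← mul_assoc, hA a ha, mul_assoc]
  · simpa [mul_inv_eq_iff_eq_mul] using hfix 1 A.one_mem t ht
  · simpa [mul_inv_eq_iff_eq_mul] using hfix a ha 1 T.one_mem

end Centralizer

section TopologicalGroup

open Topology TopologicalSpace Pointwise DoubleCoset

lemma exists_isOpen_inter_closure_subset {X ι : Type*} [TopologicalSpace X] (s : Finset ι)
    (W : ι → Set X) (hW : ∀ i ∈ s, IsLocallyClosed (W i)) (hne : (⋃ i ∈ s, W i).Nonempty) :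
    ∃ V, IsOpen V ∧ (V ∩ ⋃ i ∈ s, W i).Nonempty ∧
      V ∩ closure (⋃ i ∈ s, W i) ⊆ ⋃ i ∈ s, W i := by
  classical
  induction s using Finset.induction_on with
  | empty => simp at hne
  | insert i s _ ih =>
    obtain ⟨hWi, hWs⟩ := Finset.forall_mem_insert _ _ _ |>.1 hW
    simp only [Finset.set_biUnion_insert] at hne ⊢
    rw [closure_union]
    by_cases hi : W i ⊆ closure (⋃ j ∈ s, W j)
    · obtain ⟨V, hV, hVne, hVs⟩ := ih hWs <| by
        rw [← closure_nonempty_iff]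
        exact hne.mono (Set.union_subset hi subset_closure)
      rw [Set.union_eq_right.2 (closure_minimal hi isClosed_closure)]
      exact ⟨V, hV, hVne.mono (by gcongr; exact Set.subset_union_right),
        hVs.trans Set.subset_union_right⟩
    · obtain ⟨x, hx, hxs⟩ := Set.not_subset.1 hi
      refine ⟨coborder (W i) \ closure (⋃ j ∈ s, W j),
        hWi.isOpen_coborder.sdiff isClosed_closure,
        ⟨x, ⟨subset_coborder hx, hxs⟩, Or.inl hx⟩, ?_⟩
      rintro y ⟨⟨hy, hys⟩, hyi | hys'⟩
      · exact Or.inl (coborder_inter_closure.subset ⟨hy, hyi⟩)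
      · exact absurd hys' hys

variable {G : Type*} [Group G]

/-- A subset of a group that is stable under left multiplication by `L` and right multiplication
by `R`, that is, a union of `(L, R)`-double cosets. -/
def IsBiinvariant (L R : Subgroup G) (Y : Set G) : Prop :=
  ∀ l ∈ L, ∀ r ∈ R, ∀ y ∈ Y, l * y * r ∈ Y

variable {L L' R : Subgroup G} {Y Z : Set G}

lemma isBiinvariant_doubleCoset (y : G) : IsBiinvariant L R (doubleCoset y L R) := by
  rintro l hl r hr _ hx
  obtain ⟨l', hl', r', hr', rfl⟩ := mem_doubleCoset.1 hx
  exact mem_doubleCoset.2 ⟨l * l', L.mul_mem hl hl', r' * r, R.mul_mem hr' hr, by group⟩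

lemma IsBiinvariant.doubleCoset_subset (hY : IsBiinvariant L R Y) {y : G} (hy : y ∈ Y) :
    doubleCoset y L R ⊆ Y := by
  intro x hx
  obtain ⟨l, hl, r, hr, rfl⟩ := mem_doubleCoset.1 hx
  exact hY l hl r hr y hy

lemma IsBiinvariant.sdiff (hY : IsBiinvariant L R Y) (hZ : IsBiinvariant L R Z) :
    IsBiinvariant L R (Y \ Z) := by
  refine fun l hl r hr y hy ↦ ⟨hY l hl r hr y hy.1, fun h ↦ hy.2 ?_⟩
  simpa [mul_assoc] using hZ l⁻¹ (L.inv_mem hl) r⁻¹ (R.inv_mem hr) _ h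

lemma IsBiinvariant.sup (h : IsBiinvariant L R Y) (h' : IsBiinvariant L' R Y) :
    IsBiinvariant (L ⊔ L') R Y := by
  have le_stabilizer {K : Subgroup G} (hK : IsBiinvariant K R Y) :
      K ≤ MulAction.stabilizer G Y := fun l hl ↦ MulAction.mem_stabilizer_set.2 fun y ↦
    ⟨fun hy ↦ by simpa using hK l⁻¹ (K.inv_mem hl) 1 R.one_mem _ hy,
      fun hy ↦ by simpa using hK l hl 1 R.one_mem y hy⟩
  intro l hl r hr y hy
  have hyr : y * r ∈ Y := by simpa using h 1 L.one_mem r hr y hy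
  rw [mul_assoc]
  exact (MulAction.mem_stabilizer_set.1
    (sup_le (le_stabilizer h) (le_stabilizer h') hl) _).2 hyr

variable [TopologicalSpace G] [SeparatelyContinuousMul G]

lemma IsBiinvariant.closure (hY : IsBiinvariant L R Y) : IsBiinvariant L R (closure Y) :=
  fun l hl r hr _ hy ↦ map_mem_closure (f := (l * · * r)) (by fun_prop) hy (hY l hl r hr)

lemma exists_isBiinvariant_forall_isLocallyClosed_eq [NoetherianSpace G] (L R : Subgroup G) :
    ∃ Y : Set G, IsClosed Y ∧ Y.Nonempty ∧ IsBiinvariant L R Y ∧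
      ∀ O ⊆ Y, O.Nonempty → IsLocallyClosed O → IsBiinvariant L R O → O = Y := by
  obtain ⟨Y, ⟨hYne, hY⟩, hmin⟩ := (wellFounded_lt (α := Closeds G)).has_min
    {Y | (Y : Set G).Nonempty ∧ IsBiinvariant L R (Y : Set G)}
    ⟨⊤, ⟨1, trivial⟩, fun _ _ _ _ _ _ ↦ trivial⟩
  have eq_of_subset {C : Set G} (hC : IsClosed C) (hCY : C ⊆ Y) (hCne : C.Nonempty)
      (hCinv : IsBiinvariant L R C) : C = Y :=
    hCY.antisymm <| by_contra fun h ↦ hmin ⟨C, hC⟩ ⟨hCne, hCinv⟩ (lt_of_le_not_ge hCY h)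
  refine ⟨Y, Y.isClosed, hYne, hY, fun O hOY hOne hO hOinv ↦ hOY.antisymm ?_⟩
  have hclosure : closure O = Y := eq_of_subset isClosed_closure
    (closure_minimal hOY Y.isClosed) hOne.closure hOinv.closure
  rw [← hclosure, ← Set.sdiff_eq_empty]
  by_contra hne
  have hboundary : closure O \ O = Y := eq_of_subset
    (by simpa [coborder] using hO.isOpen_coborder.isClosed_compl)
    (Set.sdiff_subset.trans hclosure.subset) (Set.nonempty_iff_ne_empty.2 hne)
    (hOinv.closure.sdiff hOinv)
  obtain ⟨x, hx⟩ := hOne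
  exact (hboundary.superset (hOY hx)).2 hx

-- The two-sided translates of `V` cover the double coset.
lemma isLocallyClosed_doubleCoset {y : G} {V : Set G} (hV : IsOpen V)
    (hne : (V ∩ doubleCoset y L R).Nonempty)
    (hsub : V ∩ closure (doubleCoset y L R) ⊆ doubleCoset y L R) :
    IsLocallyClosed (doubleCoset y (L : Set G) R) := by
  obtain ⟨v, hvV, hv⟩ := hne
  have hinv : IsBiinvariant L R (doubleCoset y L R) := isBiinvariant_doubleCoset y
  refine ⟨⋃ (l : L) (r : R), (fun g ↦ (l : G) * g * r) ⁻¹' V, closure (doubleCoset y L R),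
    isOpen_iUnion fun l ↦ isOpen_iUnion fun r ↦ hV.preimage (by fun_prop), isClosed_closure, ?_⟩
  refine Set.Subset.antisymm (fun g hg ↦ ⟨?_, subset_closure hg⟩) ?_
  · rw [← doubleCoset_eq_of_mem hg] at hv
    obtain ⟨l, hl, r, hr, rfl⟩ := mem_doubleCoset.1 hv
    exact Set.mem_iUnion₂.2 ⟨⟨l, hl⟩, ⟨r, hr⟩, hvV⟩
  · rintro g ⟨hgV, hg⟩
    obtain ⟨⟨l, hl⟩, ⟨r, hr⟩, hlr⟩ := Set.mem_iUnion₂.1 hgV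
    simpa [mul_assoc] using hinv l⁻¹ (L.inv_mem hl) r⁻¹ (R.inv_mem hr) _
      (hsub ⟨hlr, hinv.closure l hl r hr g hg⟩)

variable {F T T' : Subgroup G}

lemma isClosed_conj_smul (hT : IsClosed (T : Set G)) (g : G) :
    IsClosed ((MulAut.conj g • T : Subgroup G) : Set G) := by
  have : ((MulAut.conj g • T : Subgroup G) : Set G) = (g⁻¹ * · * g) ⁻¹' T := by
    ext x
    simp [Set.mem_smul_set_iff_inv_smul_mem, MulAut.smul_def, ← map_inv]
  rw [this]
  exact hT.preimage (by fun_prop)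

lemma isPreconnected_conj_smul (hT : IsPreconnected (T : Set G)) (g : G) :
    IsPreconnected ((MulAut.conj g • T : Subgroup G) : Set G) := by
  have : Continuous fun x ↦ g * x * g⁻¹ := by fun_prop
  exact hT.image _ this.continuousOn

lemma le_of_isPreconnected_of_isClosed_of_relIndex_ne_zero (hT' : IsPreconnected (T' : Set G))
    (hT : IsClosed (T : Set G)) (h : T.relIndex T' ≠ 0) : T' ≤ T := by
  have : PreconnectedSpace T' := isPreconnected_iff_preconnectedSpace.1 hT'
  have : SeparatelyContinuousMul T' := inferInstanceAs (SeparatelyContinuousMul T'.toSubmonoid)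
  have : (T.subgroupOf T').FiniteIndex := ⟨h⟩
  have hclosed : IsClosed (T.subgroupOf T' : Set T') := hT.preimage continuous_subtype_val
  have hopen := (T.subgroupOf T').isOpen_of_isClosed_of_finiteIndex hclosed
  rw [← Subgroup.subgroupOf_eq_top, ← SetLike.coe_set_eq, Subgroup.coe_top]
  exact IsClopen.eq_univ ⟨hclosed, hopen⟩ ⟨1, one_mem _⟩

lemma finiteIndex_of_connectedComponent_subset [NoetherianSpace G]
    (h : connectedComponent (1 : G) ⊆ T) : T.FiniteIndex := by
  have : Finite (irreducibleComponents G) := NoetherianSpace.finite_irreducibleComponents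
  have hinj : Function.Injective fun q : G ⧸ T ↦
      (⟨irreducibleComponent q.out, irreducibleComponent_mem_irreducibleComponents _⟩ :
        irreducibleComponents G) := by
    intro q q' hqq'
    have hconn : IsPreconnected ((q.out⁻¹ * ·) '' irreducibleComponent q.out) :=
      isIrreducible_irreducibleComponent.isPreirreducible.isPreconnected.image _ (by fun_prop)
    have hmem : q'.out ∈ irreducibleComponent q.out :=
      (congrArg Subtype.val hqq').superset mem_irreducibleComponent
    have := h (hconn.subset_connectedComponent ⟨q.out, mem_irreducibleComponent, by simp⟩
      ⟨q'.out, hmem, rfl⟩)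
    rw [← q.out_eq, ← q'.out_eq]
    exact QuotientGroup.eq.2 this
  have := Finite.of_injective _ hinj
  exact Subgroup.finiteIndex_of_finite_quotient

lemma relIndex_ne_zero_of_connectedComponentIn_subset [NoetherianSpace G]
    (h : connectedComponentIn (F : Set G) 1 ⊆ T) : T.relIndex F ≠ 0 := by
  have : SeparatelyContinuousMul F := inferInstanceAs (SeparatelyContinuousMul F.toSubmonoid)
  have : NoetherianSpace F := IsInducing.subtypeVal.noetherianSpace
  rw [connectedComponentIn_eq_image F.one_mem] at h
  exact (finiteIndex_of_connectedComponent_subset (T := T.subgroupOf F)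
    (fun x hx ↦ h ⟨x, hx, rfl⟩)).index_ne_zero

end TopologicalGroup

section PolynomialMaps

open MvPolynomial

variable {K σ τ : Type*} [Field K]

lemma eval_bind₁ (P : σ → MvPolynomial τ K) (d : τ → K) (f : MvPolynomial σ K) :
    eval d (bind₁ P f) = eval (fun q ↦ eval d (P q)) f := by
  rw [← aeval_eq_eval, aeval_bind₁]
  rfl

variable [IsAlgClosed K] [Finite τ]

lemma pointToPoint_mem_range_comap_iff (I : Ideal (MvPolynomial τ K)) (P : σ → MvPolynomial τ K)
    (x : σ → K) :
    pointToPoint (k := K) x ∈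
        Set.range (PrimeSpectrum.comap ((Ideal.Quotient.mk I).comp (bind₁ P).toRingHom)) ↔
      ∃ d ∈ zeroLocus K I, x = fun q ↦ eval d (P q) := by
  constructor
  · rintro ⟨p, hp⟩
    obtain ⟨M, hM, hpM⟩ := Ideal.exists_le_maximal p.asIdeal p.2.ne_top
    obtain ⟨d, hd⟩ := isMaximal_iff_eq_vanishingIdeal_singleton.1
      (Ideal.comap_isMaximal_of_surjective (K := M) _ (Ideal.Quotient.mk_surjective (I := I)))
    have eval_eq_zero {f} (hf : Ideal.Quotient.mk I f ∈ M) : eval d f = 0 :=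
      (mem_vanishingIdeal_singleton_iff d f).1 (hd.le hf)
    refine ⟨d, fun f hf ↦ eval_eq_zero ?_, funext fun q ↦ ?_⟩
    · rw [Ideal.Quotient.eq_zero_iff_mem.2 hf]
      exact M.zero_mem
    · have hq : X q - C (x q) ∈ (pointToPoint (k := K) x).asIdeal :=
        (mem_vanishingIdeal_singleton_iff x _).2 (by simp)
      rw [← hp] at hq
      exact (sub_eq_zero.1 <| by simpa using eval_eq_zero (hpM hq)).symm
  · rintro ⟨d, hd, rfl⟩
    let φ : (MvPolynomial τ K ⧸ I) →+* K := Ideal.Quotient.lift I (eval d) hd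
    refine ⟨PrimeSpectrum.comap φ ⊥, PrimeSpectrum.ext (Ideal.ext fun f ↦ ?_)⟩
    refine Iff.trans ?_ (mem_vanishingIdeal_singleton_iff _ f).symm
    rw [aeval_eq_eval, ← eval_bind₁]
    rfl

end PolynomialMaps

section ZariskiTopology

open MvPolynomial Topology TopologicalSpace

attribute [local instance] zTop

variable {K : Type*} [Field K] {N : ℕ}

lemma preimage_pointToPoint_glCoords_zeroLocus
    (I : Set (MvPolynomial ((Fin N × Fin N) ⊕ (Fin N × Fin N)) K)) :
    (fun g ↦ pointToPoint (k := K) (glCoords K N g)) ⁻¹' PrimeSpectrum.zeroLocus I =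
      {g | ∀ f ∈ I, eval (glCoords K N g) f = 0} :=
  Set.ext fun _ ↦ forall₂_congr fun f _ ↦ mem_vanishingIdeal_singleton_iff _ f

lemma zClosed_iff_isClosed_induced {S : Set (GL (Fin N) K)} :
    ZClosed K N S ↔ IsClosed[TopologicalSpace.induced
      (fun g ↦ pointToPoint (k := K) (glCoords K N g)) inferInstance] S := by
  simp only [ZClosed, isClosed_induced_iff, PrimeSpectrum.isClosed_iff_zeroLocus]
  constructor
  · rintro ⟨I, rfl⟩
    exact ⟨_, ⟨I, rfl⟩, preimage_pointToPoint_glCoords_zeroLocus I⟩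
  · rintro ⟨_, ⟨I, rfl⟩, rfl⟩
    exact ⟨I, preimage_pointToPoint_glCoords_zeroLocus I⟩

lemma isInducing_pointToPoint_glCoords :
    IsInducing fun g : GL (Fin N) K ↦ pointToPoint (k := K) (glCoords K N g) := by
  refine ⟨?_⟩
  simp only [zTop, zClosed_iff_isClosed_induced, isClosed_compl_iff]
  exact generateFrom_setOfPred_isOpen _

lemma zClosed_iff_isClosed {S : Set (GL (Fin N) K)} : ZClosed K N S ↔ IsClosed S := by
  rw [zClosed_iff_isClosed_induced, ← isInducing_pointToPoint_glCoords.eq_induced]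

instance : NoetherianSpace (GL (Fin N) K) :=
  isInducing_pointToPoint_glCoords.noetherianSpace

variable (K N) in
/-- The coordinate ring of `GL_N`, as an algebra of functions: the polynomials in the matrix
entries and the entries of the inverse. -/
noncomputable def regularFunctions : Subalgebra K (GL (Fin N) K → K) :=
  (MvPolynomial.aeval fun q g ↦ glCoords K N g q).range

lemma mem_regularFunctions_iff {r : GL (Fin N) K → K} :
    r ∈ regularFunctions K N ↔ ∃ p, ∀ g, r g = eval (glCoords K N g) p := by
  refine exists_congr fun p ↦ funext_iff.trans <| forall_congr' fun g ↦ ?_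
  have heval : (Pi.evalAlgHom K _ g).comp (MvPolynomial.aeval fun q g ↦ glCoords K N g q) =
      MvPolynomial.aeval (glCoords K N g) := by
    ext
    simp
  rw [← aeval_eq_eval]
  exact eq_comm.trans (Eq.congr_right (DFunLike.congr_fun heval p))

lemma glCoords_mem_regularFunctions (q) : (fun g ↦ glCoords K N g q) ∈ regularFunctions K N :=
  ⟨X q, by simp⟩

lemma isClosed_setOf_eq_of_mem_regularFunctions {r s : GL (Fin N) K → K}
    (hr : r ∈ regularFunctions K N) (hs : s ∈ regularFunctions K N) :
    IsClosed {g | r g = s g} := by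
  obtain ⟨p, hp⟩ := mem_regularFunctions_iff.1 (sub_mem hr hs)
  refine zClosed_iff_isClosed.1 ⟨{p}, Set.ext fun g ↦ ?_⟩
  simp [← hp, sub_eq_zero]

lemma continuous_of_glCoords_mem_regularFunctions {φ : GL (Fin N) K → GL (Fin N) K}
    (hφ : ∀ q, (fun g ↦ glCoords K N (φ g) q) ∈ regularFunctions K N) : Continuous φ := by
  choose P hP using fun q ↦ mem_regularFunctions_iff.1 (hφ q)
  refine continuous_iff_isClosed.2 fun S hS ↦ ?_
  obtain ⟨I, rfl⟩ := zClosed_iff_isClosed.2 hS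
  refine zClosed_iff_isClosed.1 ⟨bind₁ P '' I, Set.ext fun g ↦ ?_⟩
  have hcoords : glCoords K N (φ g) = fun q ↦ eval (glCoords K N g) (P q) :=
    funext fun q ↦ hP q g
  simp [hcoords, eval_bind₁]

lemma mul_apply_mem_regularFunctions {M M' : GL (Fin N) K → Matrix (Fin N) (Fin N) K}
    (hM : ∀ i j, (fun g ↦ M g i j) ∈ regularFunctions K N)
    (hM' : ∀ i j, (fun g ↦ M' g i j) ∈ regularFunctions K N) (i j : Fin N) :
    (fun g ↦ (M g * M' g) i j) ∈ regularFunctions K N := by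
  convert sum_mem fun l (_ : l ∈ Finset.univ) ↦ mul_mem (hM i l) (hM' l j) using 1
  ext g
  simp [Matrix.mul_apply]

lemma const_mem_regularFunctions (c : K) : (fun _ ↦ c) ∈ regularFunctions K N :=
  algebraMap_mem (regularFunctions K N) c

lemma mul_mul_apply_mem_regularFunctions (c d : Matrix (Fin N) (Fin N) K)
    {M : GL (Fin N) K → Matrix (Fin N) (Fin N) K}
    (hM : ∀ i j, (fun g ↦ M g i j) ∈ regularFunctions K N) (i j : Fin N) :
    (fun g ↦ (c * M g * d) i j) ∈ regularFunctions K N :=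
  have const_mem (M : Matrix (Fin N) (Fin N) K) (i j : Fin N) := const_mem_regularFunctions (M i j)
  mul_apply_mem_regularFunctions (M := fun g ↦ c * M g) (M' := fun _ ↦ d)
    (mul_apply_mem_regularFunctions (M := fun _ ↦ c) (const_mem c) hM) (const_mem d) i j

lemma continuous_mul_mul (c d : GL (Fin N) K) : Continuous fun g ↦ c * g * d := by
  refine continuous_of_glCoords_mem_regularFunctions ?_
  rintro (⟨i, j⟩ | ⟨i, j⟩)
  · simpa [glCoords] using mul_mul_apply_mem_regularFunctions c.val d.val
      (M := fun g ↦ g.val) (fun i j ↦ glCoords_mem_regularFunctions (.inl (i, j))) i j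
  · simpa [glCoords, mul_assoc] using mul_mul_apply_mem_regularFunctions d⁻¹.val c⁻¹.val
      (M := fun g ↦ g⁻¹.val) (fun i j ↦ glCoords_mem_regularFunctions (.inr (i, j))) i j

instance : SeparatelyContinuousMul (GL (Fin N) K) where
  continuous_const_mul {c} := by simpa using continuous_mul_mul c 1
  continuous_mul_const {d} := by simpa using continuous_mul_mul 1 d

lemma isClosed_centralizer (S : Set (GL (Fin N) K)) :
    IsClosed (Subgroup.centralizer S : Set (GL (Fin N) K)) := by
  have : (Subgroup.centralizer S : Set (GL (Fin N) K)) = ⋂ s ∈ S, ⋂ (i : Fin N) (j : Fin N),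
      {g | (s.val * g.val) i j = (g.val * s.val) i j} := by
    ext g
    simp [Subgroup.mem_centralizer_iff, Units.ext_iff, ← Matrix.ext_iff]
  rw [this]
  refine isClosed_biInter fun s _ ↦ isClosed_iInter fun i ↦ isClosed_iInter fun j ↦ ?_
  have entry_mem (i j : Fin N) := glCoords_mem_regularFunctions (K := K) (.inl (i, j))
  have hleft := mul_mul_apply_mem_regularFunctions s.val 1 (M := (·.val)) entry_mem i j
  have hright := mul_mul_apply_mem_regularFunctions 1 s.val (M := (·.val)) entry_mem i j
  simpa [glCoords] using isClosed_setOf_eq_of_mem_regularFunctions hleft hright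

lemma exists_mem_glCoords_eq_of_mem_zeroLocus {S : Set (GL (Fin N) K)} (hS : IsClosed S)
    {d : (Fin N × Fin N) ⊕ (Fin N × Fin N) → K}
    (hd : d ∈ zeroLocus K (vanishingIdeal K (glCoords K N '' S))) :
    ∃ g ∈ S, glCoords K N g = d := by
  have eval_eq_zero {f} (hf : ∀ g ∈ S, eval (glCoords K N g) f = 0) : eval d f = 0 :=
    hd f <| mem_vanishingIdeal_iff.2 <| by simpa [aeval_eq_eval] using hf
  let P : Matrix (Fin N) (Fin N) K := .of fun i j ↦ d (.inl (i, j))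
  let Q : Matrix (Fin N) (Fin N) K := .of fun i j ↦ d (.inr (i, j))
  have hPQ : P * Q = 1 := by
    ext i j
    have := eval_eq_zero (f := ∑ l, X (.inl (i, l)) * X (.inr (l, j)) -
      C ((1 : Matrix (Fin N) (Fin N) K) i j)) fun g _ ↦ by
        simp [glCoords, ← Matrix.mul_apply]
    simpa [P, Q, sub_eq_zero, Matrix.mul_apply] using this
  let g : GL (Fin N) K := ⟨P, Q, hPQ, mul_eq_one_comm.1 hPQ⟩
  have hg : glCoords K N g = d := by
    ext (⟨i, j⟩ | ⟨i, j⟩) <;> rfl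
  obtain ⟨I, rfl⟩ := zClosed_iff_isClosed.2 hS
  exact ⟨g, fun f hf ↦ hg ▸ eval_eq_zero fun g hg ↦ hg f hf, hg⟩

end ZariskiTopology

section DoubleCosets

open MvPolynomial Topology TopologicalSpace DoubleCoset

attribute [local instance] zTop

variable {K : Type*} [Field K] {N : ℕ}

lemma finitePresentation_quotientMk_comp_bind₁ {σ τ : Type*} [Finite σ] [Finite τ]
    (I : Ideal (MvPolynomial τ K)) (P : σ → MvPolynomial τ K) :
    ((Ideal.Quotient.mk I).comp (bind₁ P).toRingHom).FinitePresentation := by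
  refine RingHom.FinitePresentation.of_finiteType.1 (.of_comp_finiteType (f := C) ?_)
  have : ((Ideal.Quotient.mk I).comp (bind₁ P).toRingHom).comp C =
      algebraMap K (MvPolynomial τ K ⧸ I) := by
    ext x
    exact congrArg (Ideal.Quotient.mk I) (bind₁_C_right P x)
  rw [this]
  exact RingHom.finiteType_algebraMap.2 inferInstance

lemma exists_mul_mul_glCoords_eq_eval (y : GL (Fin N) K) (q : (Fin N × Fin N) ⊕ (Fin N × Fin N)) :
    ∃ p : MvPolynomial
        (((Fin N × Fin N) ⊕ (Fin N × Fin N)) ⊕ ((Fin N × Fin N) ⊕ (Fin N × Fin N))) K,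
      ∀ h b, glCoords K N (h * y * b) q = eval (Sum.elim (glCoords K N h) (glCoords K N b)) p := by
  rcases q with ⟨i, j⟩ | ⟨i, j⟩
  · exact ⟨∑ l', (∑ l, X (.inl (.inl (i, l))) * C (y.val l l')) * X (.inr (.inl (l', j))),
      fun h b ↦ by simp [glCoords, Matrix.mul_apply]⟩
  · exact ⟨∑ l', (∑ l, X (.inr (.inr (i, l))) * C (y⁻¹.val l l')) * X (.inl (.inr (l', j))),
      fun h b ↦ by simp [glCoords, Matrix.mul_apply, ← mul_assoc]⟩

lemma exists_mem_sumElim_glCoords_eq_of_mem_zeroLocus {S S' : Set (GL (Fin N) K)}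
    (hS : IsClosed S) (hS' : IsClosed S')
    {d : ((Fin N × Fin N) ⊕ (Fin N × Fin N)) ⊕ ((Fin N × Fin N) ⊕ (Fin N × Fin N)) → K}
    (hd : d ∈ zeroLocus K (vanishingIdeal K
      (Set.image2 (fun g g' ↦ Sum.elim (glCoords K N g) (glCoords K N g')) S S'))) :
    ∃ g ∈ S, ∃ g' ∈ S', Sum.elim (glCoords K N g) (glCoords K N g') = d := by
  obtain ⟨g, hg, hgd⟩ := exists_mem_glCoords_eq_of_mem_zeroLocus (d := d ∘ .inl) hS fun f hf ↦ by
    simpa [aeval_eq_eval, eval_rename] using hd (rename .inl f) <| by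
      rintro _ ⟨g, hg, g', -, rfl⟩
      simpa [aeval_eq_eval, eval_rename] using hf _ ⟨g, hg, rfl⟩
  obtain ⟨g', hg', hgd'⟩ := exists_mem_glCoords_eq_of_mem_zeroLocus (d := d ∘ .inr) hS'
      fun f hf ↦ by
    simpa [aeval_eq_eval, eval_rename] using hd (rename .inr f) <| by
      rintro _ ⟨g, -, g', hg', rfl⟩
      simpa [aeval_eq_eval, eval_rename] using hf _ ⟨g', hg', rfl⟩
  exact ⟨g, hg, g', hg', by rw [hgd, hgd', Sum.elim_comp_inl_inr]⟩

variable [IsAlgClosed K]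

lemma exists_isOpen_inter_closure_subset_of_polynomial_image {τ : Type*} [Finite τ]
    {I : Ideal (MvPolynomial τ K)} {P : (Fin N × Fin N) ⊕ (Fin N × Fin N) → MvPolynomial τ K}
    {O : Set (GL (Fin N) K)}
    (hO : ∀ g, g ∈ O ↔ ∃ d ∈ zeroLocus K I, glCoords K N g = fun q ↦ eval d (P q))
    (hne : O.Nonempty) :
    ∃ V, IsOpen V ∧ (V ∩ O).Nonempty ∧ V ∩ closure O ⊆ O := by
  have hcont := (isInducing_pointToPoint_glCoords (K := K) (N := N)).continuous
  obtain ⟨S, hS⟩ := PrimeSpectrum.exists_constructibleSetData_iff.2 <|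
    PrimeSpectrum.isConstructible_range_comap (finitePresentation_quotientMk_comp_bind₁ I P)
  have hOS : O = ⋃ C ∈ S, (fun g ↦ pointToPoint (k := K) (glCoords K N g)) ⁻¹'
      C.toSet := by
    rw [← Set.preimage_iUnion₂]
    refine Set.ext fun g ↦ ?_
    rw [hO, ← pointToPoint_mem_range_comap_iff, ← hS]
    rfl
  rw [hOS] at hne ⊢
  refine exists_isOpen_inter_closure_subset S _ (fun C _ ↦ ?_) hne
  refine IsLocallyClosed.preimage ?_ hcont
  exact (PrimeSpectrum.isClosed_zeroLocus _).isLocallyClosed.inter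
    (PrimeSpectrum.isClosed_zeroLocus _).isOpen_compl.isLocallyClosed

-- The double coset is the image of the closed set `L × R` under a polynomial map.
lemma isLocallyClosed_doubleCoset_of_isClosed {L R : Subgroup (GL (Fin N) K)}
    (hL : IsClosed (L : Set (GL (Fin N) K))) (hR : IsClosed (R : Set (GL (Fin N) K)))
    (y : GL (Fin N) K) : IsLocallyClosed (doubleCoset y (L : Set (GL (Fin N) K)) R) := by
  choose P hP using exists_mul_mul_glCoords_eq_eval y
  have mem_iff (g) : g ∈ doubleCoset y (L : Set (GL (Fin N) K)) R ↔
      ∃ d ∈ zeroLocus K (vanishingIdeal K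
        (Set.image2 (fun h b ↦ Sum.elim (glCoords K N h) (glCoords K N b)) L R)),
        glCoords K N g = fun q ↦ eval d (P q) := by
    constructor
    · intro hg
      obtain ⟨h, hh, b, hb, rfl⟩ := mem_doubleCoset.1 hg
      exact ⟨_, fun f hf ↦ hf _ ⟨h, hh, b, hb, rfl⟩, funext fun q ↦ hP q h b⟩
    · rintro ⟨d, hd, hg⟩
      obtain ⟨h, hh, b, hb, rfl⟩ := exists_mem_sumElim_glCoords_eq_of_mem_zeroLocus hL hR hd
      refine mem_doubleCoset.2 ⟨h, hh, b, hb, Units.ext (Matrix.ext fun i j ↦ ?_)⟩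
      exact (congrFun hg (.inl (i, j))).trans (hP _ h b).symm
  obtain ⟨V, hV, hVne, hVsub⟩ := exists_isOpen_inter_closure_subset_of_polynomial_image mem_iff
    ⟨y, mem_doubleCoset_self ..⟩
  exact isLocallyClosed_doubleCoset hV hVne hVsub

end DoubleCosets

section UpperTriangular

variable {n R : Type*} [Fintype n] [LinearOrder n] [CommRing R]

variable (n R) in
/-- The standard Borel subgroup of `GL n R`: the invertible upper triangular matrices. -/
def borelSubgroup : Subgroup (GL n R) where
  carrier := {g | g.val.IsUpperTriangular}
  mul_mem' := Matrix.BlockTriangular.mul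
  one_mem' := Matrix.blockTriangular_one
  inv_mem' {g} hg := by
    have : Invertible g.val := g.invertible
    simpa using Matrix.blockTriangular_inv_of_blockTriangular hg

end UpperTriangular

section ColumnReduction

variable {n K α : Type*} [Field K] [LinearOrder α] {f : n → α} {v w : n → K} {p q : n}

/-- The leading position of a vector when the positions are ordered by the key `f`: `p` carries
a nonzero entry and all positions with a smaller key carry zeros. -/
def IsLead (f : n → α) (v : n → K) (p : n) : Prop :=
  v p ≠ 0 ∧ ∀ q, f q < f p → v q = 0

lemma exists_isLead [Finite n] (f : n → α) (hv : v ≠ 0) : ∃ p, IsLead f v p := by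
  obtain ⟨p, hp, hmin⟩ := {i | v i ≠ 0}.toFinite.exists_minimalFor f _ (Function.ne_iff.1 hv)
  exact ⟨p, hp, fun q hq ↦ by_contra fun h ↦ hq.not_ge (hmin h hq.le)⟩

lemma IsLead.lt_of_sub_smul (hf : Function.Injective f) (hv : IsLead f v p) (hw : IsLead f w p)
    (h : IsLead f (v - (v p / w p) • w) q) : f p < f q := by
  refine lt_of_not_ge fun hqp ↦ h.1 ?_
  obtain hqp | hqp := hqp.lt_or_eq
  · simp [hv.2 q hqp, hw.2 q hqp]
  · simp [hf hqp, div_mul_cancel₀ _ hw.1]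

variable [Fintype n] [LinearOrder n]

-- In each column, take the unitriangular column operation that pushes the lead furthest back.
lemma exists_perm_forall_isLead_mul (hf : Function.Injective f) (y : GL n K) :
    ∃ b ∈ borelSubgroup n K, ∃ σ : Equiv.Perm n, ∀ j, IsLead f ((y * b).val.col j) (σ j) := by
  let Op (j : n) : Set (n → K) := {c | c j = 1 ∧ ∀ i, j < i → c i = 0}
  have mulVec_ne_zero {j c} (hc : c ∈ Op j) : y.val *ᵥ c ≠ 0 := fun h ↦ by
    have hc0 : c = 0 := mulVec_injective_of_isUnit y.isUnit (by simpa using h)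
    simpa [hc0] using hc.1
  have exists_max (j) : ∃ p, ∃ c ∈ Op j, IsLead f (y.val *ᵥ c) p ∧
      ∀ c' ∈ Op j, ∀ q, IsLead f (y.val *ᵥ c') q → f q ≤ f p := by
    have hOp : Pi.single j 1 ∈ Op j := ⟨by simp, fun i hi ↦ Pi.single_eq_of_ne hi.ne' _⟩
    obtain ⟨q, hq⟩ := exists_isLead f (mulVec_ne_zero hOp)
    obtain ⟨p, ⟨c, hc, hp⟩, hmax⟩ :=
      {p | ∃ c ∈ Op j, IsLead f (y.val *ᵥ c) p}.toFinite.exists_maximalFor f _ ⟨q, _, hOp, hq⟩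
    exact ⟨p, c, hc, hp, fun c' hc' q hq ↦ le_of_not_gt fun hlt ↦
      hlt.not_ge (hmax ⟨c', hc', hq⟩ hlt.le)⟩
  choose σ c hc hlead hmax using exists_max
  have ne_of_lt {j j'} (hlt : j' < j) : σ j ≠ σ j' := fun heq ↦ by
    have hlead' := hlead j'
    rw [← heq] at hlead'
    set t := (y.val *ᵥ c j) (σ j) / (y.val *ᵥ c j') (σ j)
    have hOp : c j - t • c j' ∈ Op j := ⟨by simp [(hc j).1, (hc j').2 j hlt],
      fun i hi ↦ by simp [(hc j).2 i hi, (hc j').2 i (hlt.trans hi)]⟩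
    obtain ⟨q, hq⟩ := exists_isLead f (mulVec_ne_zero hOp)
    have hle := hmax j _ hOp q hq
    rw [mulVec_sub, mulVec_smul] at hq
    exact hle.not_gt (IsLead.lt_of_sub_smul hf (hlead j) hlead' hq)
  have hσ : Function.Injective σ := .of_lt_imp_ne fun _ _ h ↦ (ne_of_lt h).symm
  let b : Matrix n n K := .of fun i j ↦ c j i
  have hb : b.IsUpperTriangular := fun i j h ↦ (hc j).2 i h
  have hdet : b.det ≠ 0 := by
    simp [Matrix.det_of_isUpperTriangular hb, b, (hc _).1]
  exact ⟨.mkOfDetNeZero b hdet, hb, .ofBijective σ (Finite.injective_iff_bijective.1 hσ), hlead⟩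

end ColumnReduction

section Diagonal

variable {n R : Type*} [Fintype n] [CommRing R]

/-- The embedding of the diagonal torus into `GL n R`. -/
def diagGL [DecidableEq n] : (n → Rˣ) →* GL n R :=
  (Units.map (Matrix.diagonalRingHom n R).toMonoidHom).comp MulEquiv.piUnits.symm.toMonoidHom

@[simp]
lemma val_diagGL [DecidableEq n] (d : n → Rˣ) :
    (diagGL d).val = Matrix.diagonal fun i ↦ (d i : R) := rfl

lemma diagGL_injective [DecidableEq n] :
    Function.Injective (diagGL (n := n) (R := R)) :=
  fun _ _ h ↦ funext fun i ↦ Units.ext <|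
    congrFun (Matrix.diagonal_injective (congrArg Units.val h :)) i

variable [LinearOrder n]

lemma diagGL_mem_borelSubgroup (d : n → Rˣ) : diagGL d ∈ borelSubgroup n R :=
  Matrix.blockTriangular_diagonal _

/-- The homomorphism reading off the diagonal of an invertible upper triangular matrix. -/
def diagUnits : borelSubgroup n R →* (n → Rˣ) :=
  MonoidHom.pi fun i ↦ MonoidHom.toHomUnits
    { toFun := fun g ↦ g.1.val i i
      map_one' := by simp
      map_mul' := fun g h ↦ by
        simp only [Subgroup.coe_mul, Units.val_mul, Matrix.mul_apply]
        refine Finset.sum_eq_single i (fun j _ hji ↦ ?_) (by simp)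
        obtain hji | hij := hji.lt_or_gt
        · rw [g.2 hji, zero_mul]
        · rw [h.2 hij, mul_zero] }

@[simp]
lemma diagUnits_apply (g : borelSubgroup n R) (i : n) : (diagUnits g i : R) = g.1.val i i := rfl

end Diagonal

section Weights

open MvPolynomial

attribute [local instance] zTop

variable {K : Type*} [Field K] {N : ℕ}

lemma monoidAlgebra_eq_zero_of_forall_lift_eval_eq_zero {G : Type*} [Monoid G]
    {X : Subgroup (G →* Kˣ)} {f : MonoidAlgebra K X}
    (hf : ∀ g, MonoidAlgebra.lift K K X
      ((Units.coeHom K).comp ((MonoidHom.eval g).comp X.subtype)) f = 0) : f = 0 := by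
  let ι (x : X) : G →* K := (Units.coeHom K).comp x
  have hι : Function.Injective ι := fun x y h ↦ Subtype.ext <| MonoidHom.ext fun g ↦
    Units.ext <| DFunLike.congr_fun h g
  have hcoeff : f.coeff = 0 := by
    refine linearIndependent_iff.1 ((linearIndependent_monoidHom G K).comp ι hι) _ ?_
    funext g
    simpa [Finsupp.linearCombination_apply, Finsupp.sum, MonoidAlgebra.lift_apply, ι] using hf g
  ext x
  simp [hcoeff]

/-- The images of the coordinates of `GL_N` under restriction to the diagonal matrices whose
entries are the characters `χ i`. -/
noncomputable def diagCoords {X : Type*} [CommGroup X] (χ : Fin N → X) :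
    (Fin N × Fin N) ⊕ (Fin N × Fin N) → MonoidAlgebra K X :=
  Sum.elim (fun p ↦ Matrix.diagonal (fun i ↦ MonoidAlgebra.single (χ i) 1) p.1 p.2)
    (fun p ↦ Matrix.diagonal (fun i ↦ MonoidAlgebra.single (χ i)⁻¹ 1) p.1 p.2)

lemma glCoords_diagGL (d : Fin N → Kˣ) :
    glCoords K N (diagGL d) = Sum.elim (fun p ↦ Matrix.diagonal (fun i ↦ (d i : K)) p.1 p.2)
      (fun p ↦ Matrix.diagonal (fun i ↦ ((d i)⁻¹ : Kˣ).val) p.1 p.2) := rfl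

lemma lift_aeval_diagCoords {X : Type*} [CommGroup X] (χ : Fin N → X) (F : X →* Kˣ)
    (p : MvPolynomial ((Fin N × Fin N) ⊕ (Fin N × Fin N)) K) :
    MonoidAlgebra.lift K K X ((Units.coeHom K).comp F) (aeval (diagCoords χ) p) =
      eval (glCoords K N (diagGL fun i ↦ F (χ i))) p := by
  rw [← AlgHom.comp_apply, ← aeval_eq_eval]
  congr 1
  refine algHom_ext fun q ↦ ?_
  obtain ⟨i, j⟩ | ⟨i, j⟩ := q <;> obtain rfl | hij := eq_or_ne i j <;>
    simp [diagCoords, glCoords_diagGL, *]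

/-- The `i`-th coordinate character of a group of diagonal matrices. -/
def coordChar (D : Subgroup (Fin N → Kˣ)) (i : Fin N) : D →* Kˣ :=
  (Pi.evalMonoidHom _ i).comp D.subtype

lemma apply_coordChar_mem_comap_diagGL {A : Subgroup (GL (Fin N) K)}
    (hA : IsClosed (A : Set (GL (Fin N) K))) {X : Subgroup (A.comap diagGL →* Kˣ)}
    (χ : Fin N → X) (hχ : ∀ i, χ i = coordChar (A.comap diagGL) i) (F : X →* Kˣ) :
    diagGL (fun i ↦ F (χ i)) ∈ A := by
  obtain ⟨I, hI⟩ := zClosed_iff_isClosed.2 hA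
  rw [← SetLike.mem_coe, hI]
  intro p hp
  rw [← lift_aeval_diagCoords, monoidAlgebra_eq_zero_of_forall_lift_eval_eq_zero (f := aeval _ p),
    map_zero]
  intro d
  rw [lift_aeval_diagCoords]
  refine (hI.subset (?_ : _ ∈ A)) p hp
  have heval (i) : ((MonoidHom.eval d).comp X.subtype) (χ i) = d.1 i := by simp [hχ, coordChar]
  simp only [heval]
  exact d.2

lemma isDiag_iff_mem_range_diagGL {g : GL (Fin N) K} :
    IsDiag K N g ↔ g ∈ (diagGL : (Fin N → Kˣ) →* GL (Fin N) K).range := by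
  constructor
  · intro hg
    have hgB : g ∈ borelSubgroup (Fin N) K := fun i j hji ↦ hg i j hji.ne'
    refine ⟨diagUnits ⟨g, hgB⟩, Units.ext <| Matrix.ext fun i j ↦ ?_⟩
    obtain rfl | hij := eq_or_ne i j
    · simp
    · simp [hij, hg i j hij]
  · rintro ⟨d, rfl⟩ i j hij
    simp [hij]

lemma exists_mem_regularFunctions_of_mem_closure_range_coordChar {D : Subgroup (Fin N → Kˣ)}
    {x : D →* Kˣ} (hx : x ∈ Subgroup.closure (Set.range (coordChar D))) :
    (∃ r ∈ regularFunctions K N, ∀ d : D, (x d : K) = r (diagGL d)) ∧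
      ∃ r ∈ regularFunctions K N, ∀ d : D, ((x d)⁻¹ : Kˣ) = r (diagGL d) := by
  induction hx using Subgroup.closure_induction with
  | mem x hx =>
    obtain ⟨i, rfl⟩ := hx
    exact ⟨⟨_, glCoords_mem_regularFunctions (.inl (i, i)), by simp [glCoords_diagGL, coordChar]⟩,
      ⟨_, glCoords_mem_regularFunctions (.inr (i, i)), by simp [glCoords_diagGL, coordChar]⟩⟩
  | one => exact ⟨⟨1, one_mem _, by simp⟩, ⟨1, one_mem _, by simp⟩⟩
  | mul x y _ _ ihx ihy =>
    obtain ⟨⟨r, hr, hxr⟩, ⟨r', hr', hxr'⟩⟩ := ihx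
    obtain ⟨⟨s, hs, hys⟩, ⟨s', hs', hys'⟩⟩ := ihy
    exact ⟨⟨r * s, mul_mem hr hs, by simp [hxr, hys]⟩,
      ⟨r' * s', mul_mem hr' hs', fun d ↦ by simp [mul_comm, ← hxr', ← hys']⟩⟩
  | inv x _ ih => exact ⟨ih.2, by simpa using ih.1⟩

lemma eq_one_of_pow_eq_one_of_mem_closure_range_coordChar {A : Subgroup (GL (Fin N) K)}
    (hA : IsClosed (A : Set (GL (Fin N) K))) (hconn : IsPreconnected (A : Set (GL (Fin N) K)))
    (hdiag : A ≤ diagGL.range) {x : A.comap diagGL →* Kˣ}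
    (hx : x ∈ Subgroup.closure (Set.range (coordChar (A.comap diagGL)))) {n : ℕ} (hn : n ≠ 0)
    (hxn : x ^ n = 1) : x = 1 := by
  obtain ⟨⟨r, hr, hxr⟩, -⟩ := exists_mem_regularFunctions_of_mem_closure_range_coordChar hx
  have hDA : (A.comap diagGL).map diagGL = A := Subgroup.map_comap_eq_self hdiag
  let B : Subgroup (GL (Fin N) K) := (x.ker.map (Subgroup.subtype _)).map diagGL
  have hB : IsClosed (B : Set (GL (Fin N) K)) := by
    convert hA.inter (isClosed_setOf_eq_of_mem_regularFunctions hr (one_mem _)) using 1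
    ext g
    constructor
    · rintro ⟨_, ⟨d, hd, rfl⟩, rfl⟩
      exact ⟨d.2, by simpa [← hxr] using hd⟩
    · rintro ⟨hgA, hgr⟩
      obtain ⟨d, rfl⟩ := hdiag hgA
      exact ⟨d, ⟨⟨d, hgA⟩, Units.ext ((hxr ⟨d, hgA⟩).trans hgr), rfl⟩, rfl⟩
  have hfinite : Finite x.range := by
    have := NeZero.mk hn
    refine Set.Finite.subset (inferInstance : Finite (rootsOfUnity n K)) ?_
    rintro _ ⟨d, rfl⟩
    exact (mem_rootsOfUnity _ _).2 (DFunLike.congr_fun hxn d)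
  have hindex : B.relIndex A ≠ 0 := by
    rw [← hDA, Subgroup.relIndex_map_map_of_injective _ _ diagGL_injective, Subgroup.relIndex,
      Subgroup.subgroupOf, Subgroup.comap_map_eq_self_of_injective (Subgroup.subtype_injective _),
      Subgroup.index_ker]
    exact Nat.card_pos.ne'
  ext d
  obtain ⟨_, ⟨d', hd', rfl⟩, hdd'⟩ :=
    le_of_isPreconnected_of_isClosed_of_relIndex_ne_zero hconn hB hindex d.2
  obtain rfl : d' = d := Subtype.ext (diagGL_injective hdd')
  exact congrArg Units.val hd'

lemma exists_dual_forall_apply_ne_zero {M ι : Type*} [AddCommGroup M] [Module.Projective ℤ M]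
    [Finite ι] {v : ι → M} (hv : ∀ i, v i ≠ 0) : ∃ φ : Module.Dual ℤ M, ∀ i, φ (v i) ≠ 0 := by
  have := Fintype.ofFinite ι
  by_contra! h
  obtain ⟨i, -, hfinite⟩ := Submodule.exists_finiteIndex_of_cover (s := Finset.univ)
    (p := fun i ↦ LinearMap.ker (Module.Dual.eval ℤ M (v i))) (by
      ext φ
      simpa using h φ)
  obtain ⟨φ, hφ⟩ := Module.Projective.exists_dual_ne_zero ℤ (hv i)
  obtain ⟨n, hn, -, hmem⟩ := AddSubgroup.exists_nsmul_mem_of_index_ne_zero hfinite.index_ne_zero φ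
  have : n • φ (v i) = 0 := by simpa using hmem
  simp_all [hn.ne']

lemma exists_weights_forall_diagGL_zpow_mem {A : Subgroup (GL (Fin N) K)}
    (hA : IsClosed (A : Set (GL (Fin N) K))) (hconn : IsPreconnected (A : Set (GL (Fin N) K)))
    (hdiag : A ≤ diagGL.range) : ∃ m : Fin N → ℤ,
      (∀ i j, m i = m j → ∀ d, diagGL d ∈ A → d i = d j) ∧
      ∀ s : Kˣ, diagGL (fun i ↦ s ^ m i) ∈ A := by
  let X := Subgroup.closure (Set.range (coordChar (A.comap diagGL)))
  let χ (i : Fin N) : X := ⟨coordChar _ i, Subgroup.subset_closure ⟨i, rfl⟩⟩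
  have : Group.FG X := Group.closure_finite_fg _
  have : IsMulTorsionFree X := by
    refine isMulTorsionFree_iff_not_isOfFinOrder.2 fun x hx hfin ↦ hx ?_
    obtain ⟨n, hn, hxn⟩ := isOfFinOrder_iff_pow_eq_one.1 hfin
    exact Subtype.ext <| eq_one_of_pow_eq_one_of_mem_closure_range_coordChar hA hconn hdiag x.2
      hn.ne' (congrArg Subtype.val hxn)
  have : Module.Finite ℤ (Additive X) := Module.Finite.iff_addGroup_fg.2 inferInstance
  obtain ⟨φ, hφ⟩ := exists_dual_forall_apply_ne_zero
    (v := fun p : {p : Fin N × Fin N // χ p.1 ≠ χ p.2} ↦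
      Additive.ofMul (χ p.1.1) - Additive.ofMul (χ p.1.2))
    (fun p ↦ sub_ne_zero.2 (Additive.ofMul.injective.ne p.2))
  refine ⟨fun i ↦ φ (.ofMul (χ i)), fun i j hij d hd ↦ ?_, fun s ↦ ?_⟩
  · have hχ : χ i = χ j := by
      by_contra h
      exact hφ ⟨(i, j), h⟩ (by rw [map_sub, sub_eq_zero]; exact hij)
    exact DFunLike.congr_fun (congrArg Subtype.val hχ) ⟨d, hd⟩
  · let F : X →* Kˣ := (zpowersHom Kˣ s).comp φ.toAddMonoidHom.toMultiplicativeRight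
    exact apply_coordChar_mem_comap_diagGL hA χ (fun _ ↦ rfl) F

end Weights

section Degeneration

open Polynomial

variable {n K : Type*} [Field K] {m w : n → ℤ} {z : Matrix n n K}

/-- The polynomial extension to `s = 0` of the family `diag(s ^ m) * z * diag(s ^ w)⁻¹` of
matrices. -/
noncomputable def degeneration (m w : n → ℤ) (z : Matrix n n K) : Matrix n n K[X] :=
  .of fun i j ↦ C (z i j) * X ^ (m i - w j).toNat

variable [Fintype n] [DecidableEq n]

lemma mapMatrix_eval_degeneration (hz : ∀ i j, z i j ≠ 0 → w j ≤ m i) (s : Kˣ) :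
    (evalRingHom (s : K)).mapMatrix (degeneration m w z) =
      (diagGL fun i ↦ s ^ m i).val * z * (diagGL fun j ↦ s ^ (-w j)).val := by
  ext i j
  simp only [degeneration, RingHom.mapMatrix_apply, Matrix.map_apply, Matrix.of_apply,
    coe_evalRingHom, eval_mul, eval_C, eval_pow, eval_X, val_diagGL, Matrix.mul_diagonal,
    Matrix.diagonal_mul]
  by_cases h : z i j = 0
  · simp [h]
  · have hs : s ^ (m i - w j).toNat = s ^ m i * s ^ (-w j) := by
      rw [← zpow_natCast, Int.toNat_sub_of_le (hz i j h), sub_eq_add_neg, _root_.zpow_add]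
    rw [← Units.val_pow_eq_pow_val, hs, Units.val_mul]
    ring

lemma det_degeneration [Infinite K] (hz : ∀ i j, z i j ≠ 0 → w j ≤ m i)
    (hsum : ∑ i, m i = ∑ j, w j) : (degeneration m w z).det = C z.det := by
  refine eq_of_infinite_eval_eq _ _ ((Set.finite_singleton (0 : K)).infinite_compl.mono ?_)
  intro s hs
  obtain ⟨u, rfl⟩ : ∃ u : Kˣ, u = s := ⟨Units.mk0 s hs, rfl⟩
  have prod_zpow (v : n → ℤ) : ∏ i, u ^ v i = u ^ ∑ i, v i := by
    simpa [← ofAdd_sum] using (map_prod (zpowersHom Kˣ u) (.ofAdd ∘ v) Finset.univ).symm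
  have hprod : (∏ i, u ^ m i) * ∏ j, u ^ (-w j) = 1 := by
    rw [prod_zpow, prod_zpow, ← _root_.zpow_add, hsum, Finset.sum_neg_distrib, add_neg_cancel,
      zpow_zero]
  have hdet := congrArg Matrix.det (mapMatrix_eval_degeneration hz u)
  rw [← RingHom.map_det, Matrix.det_mul, Matrix.det_mul, val_diagGL, val_diagGL,
    Matrix.det_diagonal, Matrix.det_diagonal, mul_right_comm, ← Units.coe_prod, ← Units.coe_prod,
    ← Units.val_mul, hprod, Units.val_one, one_mul] at hdet
  simpa using hdet

lemma eq_of_eval_zero_degeneration_apply_ne_zero (hz : ∀ i j, z i j ≠ 0 → w j ≤ m i) {i j : n}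
    (h : (evalRingHom 0).mapMatrix (degeneration m w z) i j ≠ 0) : m i = w j := by
  have h' : z i j ≠ 0 ∧ ((m i - w j).toNat = 0) := by simpa [degeneration] using h
  have := hz i j h'.1
  omega

end Degeneration

section FixedPoint

open Polynomial

attribute [local instance] zTop

variable {K : Type*} [Field K] {N : ℕ}

lemma map_eval_mem_of_infinite {Y : Set (GL (Fin N) K)} (hY : IsClosed Y) {Z : GL (Fin N) K[X]}
    (hZ : {s | Matrix.GeneralLinearGroup.map (evalRingHom s) Z ∈ Y}.Infinite) (s : K) :
    Matrix.GeneralLinearGroup.map (evalRingHom s) Z ∈ Y := by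
  let coords : (Fin N × Fin N) ⊕ (Fin N × Fin N) → K[X] :=
    Sum.elim (fun p ↦ Z.val p.1 p.2) (fun p ↦ Z⁻¹.val p.1 p.2)
  have hcoords (s : K) : glCoords K N (Matrix.GeneralLinearGroup.map (evalRingHom s) Z) =
      fun q ↦ (coords q).eval s := by
    ext (q | q) <;> rfl
  obtain ⟨I, rfl⟩ := zClosed_iff_isClosed.2 hY
  intro f hf
  have heval (s : K) : MvPolynomial.eval
      (glCoords K N (Matrix.GeneralLinearGroup.map (evalRingHom s) Z)) f =
        (MvPolynomial.aeval coords f).eval s := by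
    rw [hcoords, ← MvPolynomial.aeval_eq_eval, ← Polynomial.coe_aeval_eq_eval]
    exact (MvPolynomial.comp_aeval_apply coords (Polynomial.aeval s) f).symm
  have hroots : {s | (MvPolynomial.aeval coords f).IsRoot s}.Infinite := by
    refine hZ.mono fun s hs ↦ ?_
    exact (heval s).symm.trans (hs f hf)
  rw [heval, eq_zero_of_infinite_isRoot _ hroots, eval_zero]

lemma exists_mem_forall_inv_mul_mul_mem_range_diagGL [Infinite K] {A : Subgroup (GL (Fin N) K)}
    (hA : IsClosed (A : Set (GL (Fin N) K))) (hconn : IsPreconnected (A : Set (GL (Fin N) K)))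
    (hdiag : A ≤ diagGL.range) {Y : Set (GL (Fin N) K)} (hY : IsClosed Y) (hne : Y.Nonempty)
    (hinv : IsBiinvariant A (borelSubgroup (Fin N) K) Y) :
    ∃ y ∈ Y, ∀ a ∈ A, y⁻¹ * a * y ∈ diagGL.range := by
  obtain ⟨m, hm, hmA⟩ := exists_weights_forall_diagGL_zpow_mem hA hconn hdiag
  obtain ⟨y, hy⟩ := hne
  obtain ⟨b, hb, σ, hlead⟩ := exists_perm_forall_isLead_mul (f := fun i ↦ toLex (m i, i))
    (fun i j h ↦ congrArg (fun p ↦ (ofLex p).2) h) y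
  have hz (i j) (hij : (y * b).val i j ≠ 0) : m (σ j) ≤ m i := by
    by_contra! h
    exact hij ((hlead j).2 i (Prod.Lex.toLex_lt_toLex.2 (.inl h)))
  have hsum : ∑ i, m i = ∑ j, m (σ j) := (Equiv.sum_comp σ m).symm
  have hdet : IsUnit (degeneration m (fun j ↦ m (σ j)) (y * b).val).det := by
    rw [det_degeneration hz hsum]
    exact (isUnit_iff_ne_zero.2 (Matrix.GeneralLinearGroup.det_ne_zero _)).map C
  let Z : GL (Fin N) K[X] := Matrix.GeneralLinearGroup.mk'' _ hdet
  let z : GL (Fin N) K := Matrix.GeneralLinearGroup.map (evalRingHom 0) Z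
  refine ⟨z, map_eval_mem_of_infinite hY
    ((Set.finite_singleton (0 : K)).infinite_compl.mono fun s hs ↦ ?_) 0, fun a ha ↦ ?_⟩
  · obtain ⟨u, rfl⟩ : ∃ u : Kˣ, u = s := ⟨Units.mk0 s hs, rfl⟩
    have hZu : Matrix.GeneralLinearGroup.map (evalRingHom (u : K)) Z =
        diagGL (fun i ↦ u ^ m i) * y * (b * diagGL fun j ↦ u ^ (-m (σ j))) := by
      rw [mul_assoc, ← mul_assoc y, ← mul_assoc]
      exact Units.ext (mapMatrix_eval_degeneration hz u)
    rw [Set.mem_ofPred, hZu]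
    exact hinv _ (hmA u) _ (mul_mem hb (diagGL_mem_borelSubgroup _)) y hy
  · obtain ⟨d, rfl⟩ := hdiag ha
    refine ⟨d ∘ σ, ?_⟩
    rw [mul_assoc, eq_inv_mul_iff_mul_eq]
    ext i j
    by_cases h : z.val i j = 0
    · simp [h]
    · have := eq_of_eval_zero_degeneration_apply_ne_zero hz h
      simp [hm _ _ this d ha, mul_comm]

end FixedPoint

section Elimination

open scoped commutatorElement

variable {n K : Type*} [Fintype n] [LinearOrder n] [Field K] {a b t : borelSubgroup n K}

-- The element is `t + (b * (a * t * a⁻¹) * b⁻¹ - b * t * b⁻¹) * w` with `w = b * t⁻¹ * b⁻¹ * t`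
-- unitriangular, and `w` does not affect the leading entries of the rows of the difference.
lemma conj_commutator_mul_apply {d e : n → Kˣ} (ha : a.1 = diagGL d) (hb : b.1 = diagGL e)
    {i q : n} (hq : ∀ r < q, t.1.val i r = 0 ∨ d i = d r) :
    (b * ⁅a, t⁆ * b⁻¹ * t).1.val i q =
      (1 + (e i / e q : Kˣ) * ((d i / d q : Kˣ) - 1)) * t.1.val i q := by
  set w := b * t⁻¹ * b⁻¹ * t with hw
  have hw_diag : w.1.val q q = 1 := by
    have h : diagUnits w = 1 := by
      simp only [hw, map_mul, map_inv, mul_inv_cancel_comm, inv_mul_cancel]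
    rw [← diagUnits_apply, h, Pi.one_apply, Units.val_one]
  set z := (b * (a * t * a⁻¹) * b⁻¹).1.val - (b * t * b⁻¹).1.val with hz
  have hz_apply (r : n) : z i r = (e i / e r : Kˣ) * ((d i / d r : Kˣ) - 1) * t.1.val i r := by
    simp only [hz, Subgroup.coe_mul, Subgroup.coe_inv, ha, hb, ← map_inv, Units.val_mul,
      val_diagGL, Matrix.sub_apply, Matrix.diagonal_mul, Matrix.mul_diagonal, div_eq_mul_inv,
      Pi.inv_apply]
    ring
  have hsum : (b * ⁅a, t⁆ * b⁻¹ * t).1.val = t.1.val + z * w.1.val := by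
    have h₁ : b * ⁅a, t⁆ * b⁻¹ * t = b * (a * t * a⁻¹) * b⁻¹ * w := by
      rw [commutatorElement_def, hw]; group
    have h₂ : t = b * t * b⁻¹ * w := by rw [hw]; group
    rw [sub_mul, ← Units.val_mul, ← Units.val_mul, ← Subgroup.coe_mul, ← Subgroup.coe_mul, ← h₁,
      ← h₂, add_sub_cancel]
  rw [hsum, Matrix.add_apply, Matrix.mul_apply, Finset.sum_eq_single q, hw_diag, hz_apply]
  · ring
  · intro r _ hrq
    obtain hrq | hqr := hrq.lt_or_gt
    · obtain h | h := hq r hrq <;> simp [hz_apply, h]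
    · rw [w.2 hqr, mul_zero]
  · simp

lemma zero_mem_of_forall_isLead {ι α : Type*} [Finite ι] [LinearOrder α] {f : ι → α}
    {V : Set (ι → K)} (hV : V.Nonempty)
    (h : ∀ v ∈ V, ∀ p, IsLead f v p → ∃ w ∈ V, ∀ q, f q ≤ f p → w q = 0) : 0 ∈ V := by
  by_contra h0
  obtain ⟨v, hv⟩ := hV
  have exists_lead {v} (hv : v ∈ V) : ∃ p, IsLead f v p :=
    exists_isLead f (ne_of_mem_of_not_mem hv h0)
  obtain ⟨p, ⟨v, hv, hp⟩, hmax⟩ := {p | ∃ v ∈ V, IsLead f v p}.toFinite.exists_maximalFor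
    f _ ((exists_lead hv).imp fun p hp ↦ ⟨v, hv, hp⟩)
  obtain ⟨w, hw, hwp⟩ := h v hv p hp
  obtain ⟨q, hq⟩ := exists_lead hw
  have hpq : f p < f q := lt_of_not_ge fun hqp ↦ hq.1 (hwp q hqp)
  exact hpq.not_ge (hmax ⟨w, hw, hq⟩ hpq.le)

lemma exists_units_zpow_eq [IsAlgClosed K] {j : ℤ} (hj : j ≠ 0) (x : Kˣ) :
    ∃ s : Kˣ, s ^ j = x := by
  have exists_pow (x : Kˣ) : ∃ s : Kˣ, s ^ j.natAbs = x := by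
    obtain ⟨z, hz⟩ := IsAlgClosed.exists_pow_nat_eq (x : K) (Int.natAbs_pos.2 hj)
    have hz0 : z ≠ 0 := by
      rintro rfl
      exact x.ne_zero (by rw [← hz, zero_pow (Int.natAbs_ne_zero.2 hj)])
    exact ⟨Units.mk0 z hz0, Units.ext hz⟩
  obtain h | h := j.natAbs_eq
  · obtain ⟨s, hs⟩ := exists_pow x
    exact ⟨s, by rw [h, zpow_natCast, hs]⟩
  · obtain ⟨s, hs⟩ := exists_pow x⁻¹
    exact ⟨s, by rw [h, _root_.zpow_neg, zpow_natCast, hs, inv_inv]⟩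

lemma exists_one_add_zpow_mul_zpow_sub_one_eq_zero [IsAlgClosed K] {j : ℤ} (hj : j ≠ 0) :
    ∃ r s : Kˣ, 1 + ((r ^ j : Kˣ) : K) * ((s ^ j : Kˣ) - 1) = 0 := by
  obtain ⟨x, hx⟩ := (Set.toFinite {(0 : K), 1}).exists_notMem
  obtain ⟨hx0, hx1⟩ : x ≠ 0 ∧ x ≠ 1 := by simpa using hx
  obtain ⟨s, hs⟩ := exists_units_zpow_eq hj (Units.mk0 x hx0)
  obtain ⟨r, hr⟩ := exists_units_zpow_eq hj (Units.mk0 (1 - x) (sub_ne_zero.2 hx1.symm))⁻¹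
  refine ⟨r, s, ?_⟩
  rw [hs, hr, Units.val_inv_eq_inv_val, Units.val_mk0, Units.val_mk0]
  field_simp [sub_ne_zero.2 hx1.symm]
  ring

lemma exists_mem_diagUnits_eq_forall_apply_eq_zero [IsAlgClosed K] {S : Subgroup (GL n K)}
    {m : n → ℤ} (hS : ∀ (s : Kˣ), ∀ g ∈ S,
      diagGL (fun i ↦ s ^ m i) * g * (diagGL fun i ↦ s ^ m i)⁻¹ ∈ S)
    (t : borelSubgroup n K) (ht : t.1 ∈ S) :
    ∃ f : borelSubgroup n K, f.1 ∈ S ∧ diagUnits f = diagUnits t ∧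
      ∀ i j, m i ≠ m j → f.1.val i j = 0 := by
  let offWeight (f : borelSubgroup n K) (p : n × n) : K :=
    if m p.1 = m p.2 then 0 else f.1.val p.1 p.2
  suffices 0 ∈ offWeight '' {f | f.1 ∈ S ∧ diagUnits f = diagUnits t} by
    obtain ⟨f, ⟨hfS, hft⟩, hf⟩ := this
    exact ⟨f, hfS, hft, fun i j hij ↦ by simpa [offWeight, hij] using congrFun hf (i, j)⟩
  refine zero_mem_of_forall_isLead (f := fun p ↦ toLex (p.2, p.1)) ⟨_, t, ⟨ht, rfl⟩, rfl⟩ ?_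
  rintro _ ⟨f, ⟨hfS, hft⟩, rfl⟩ ⟨p, l⟩ ⟨hne, hlt⟩
  have hpl : m p ≠ m l := fun h ↦ hne (if_pos h)
  obtain ⟨r, s, hrs⟩ := exists_one_add_zpow_mul_zpow_sub_one_eq_zero (K := K) (sub_ne_zero.2 hpl)
  let a : borelSubgroup n K := ⟨diagGL fun i ↦ s ^ m i, diagGL_mem_borelSubgroup _⟩
  let b : borelSubgroup n K := ⟨diagGL fun i ↦ r ^ m i, diagGL_mem_borelSubgroup _⟩
  refine ⟨_, ⟨b * ⁅a, f⁆ * b⁻¹ * f, ⟨?_, ?_⟩, rfl⟩, ?_⟩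
  · exact mul_mem (hS r _ (mul_mem (hS s _ hfS) (inv_mem hfS))) hfS
  · simp only [commutatorElement_def, map_mul, map_inv, mul_inv_cancel_comm, mul_inv_cancel,
      one_mul, hft]
  · rintro ⟨i, q⟩ hle
    by_cases hiq : m i = m q
    · exact if_pos hiq
    have hle' : toLex (q, i) ≤ toLex (l, p) := hle
    have hzero {i' q' : n} (hlt' : toLex (q', i') < toLex (l, p)) (h : m i' ≠ m q') :
        f.1.val i' q' = 0 := by
      simpa [offWeight, h] using hlt (i', q') hlt'
    have hrow : ∀ c < q, f.1.val i c = 0 ∨ s ^ m i = s ^ m c := fun c hc ↦ by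
      by_cases h : m i = m c
      · exact .inr (by rw [h])
      · exact .inl (hzero ((Prod.Lex.toLex_lt_toLex.2 (.inl hc)).trans_le hle') h)
    simp only [offWeight, if_neg hiq]
    rw [conj_commutator_mul_apply rfl rfl hrow]
    obtain hlt' | heq := hle'.lt_or_eq
    · rw [hzero hlt' hiq, mul_zero]
    · obtain ⟨rfl, rfl⟩ := Prod.mk.inj (toLex_inj.1 heq)
      rw [div_eq_mul_inv, div_eq_mul_inv, ← _root_.zpow_sub, ← _root_.zpow_sub, hrs, zero_mul]

end Elimination

section Index

open Polynomial

variable {n K : Type*} [Fintype n] [LinearOrder n] [Field K]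

lemma relIndex_ne_zero_of_map_le_map {G G' : Type*} [Group G] [Group G'] (f : G →* G')
    {T F S : Subgroup G} (hTS : T ≤ S) (hf : Set.InjOn f S) (hSF : S.map f ≤ F.map f)
    (hTF : T.relIndex F ≠ 0) : T.relIndex S ≠ 0 := by
  have map_relIndex_map : (T.map f).relIndex (F.map f) ≠ 0 := by
    rw [← Subgroup.relIndex_comap]
    exact mt (Subgroup.relIndex_eq_zero_of_le_left (T.le_comap_map f)) hTF
  have hle : (T.map f).comap f ⊓ S ≤ T := by
    rintro s ⟨⟨t, ht, hts⟩, hs⟩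
    rwa [← hf (hTS ht) hs hts]
  have hS := mt (Subgroup.relIndex_eq_zero_of_le_right hSF) map_relIndex_map
  rw [← Subgroup.relIndex_comap, ← Subgroup.inf_relIndex_right] at hS
  exact mt (Subgroup.relIndex_eq_zero_of_le_left hle) hS

lemma eq_one_of_diagUnits_eq_one_of_conj_mem_range_diagGL {u : borelSubgroup n K} {c : GL n K}
    (hu : diagUnits u = 1) (hc : c * u.1 * c⁻¹ ∈ diagGL.range) : u = 1 := by
  obtain ⟨d, hd⟩ := hc
  have hchar : ∏ i, (X - C (d i : K)) = (X - C 1) ^ Fintype.card n := by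
    have hu' (i : n) : u.1.val i i = 1 := by rw [← diagUnits_apply, hu]; rfl
    rw [← Matrix.charpoly_diagonal, ← val_diagGL, hd, Units.val_mul, Units.val_mul,
      Matrix.coe_units_inv, Matrix.charpoly_units_conj, Matrix.charpoly_of_isUpperTriangular _ u.2]
    simp [hu']
  have hd1 : d = 1 := funext fun i ↦ Units.ext <| by
    have h := congrArg (eval (d i : K)) hchar
    rw [eval_prod, Finset.prod_eq_zero (Finset.mem_univ i) (by simp), eval_pow] at h
    simpa [sub_eq_zero] using eq_zero_of_pow_eq_zero h.symm
  rw [hd1, map_one, eq_comm, mul_inv_eq_one, mul_eq_left] at hd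
  exact Subtype.ext hd

end Index

section Rigidity

open Pointwise

attribute [local instance] zTop

variable {K : Type*} [Field K] [IsAlgClosed K] {N : ℕ} {A H S T : Subgroup (GL (Fin N) K)}

lemma relIndex_ne_zero_of_le_borelSubgroup (hA : IsClosed (A : Set (GL (Fin N) K)))
    (hconn : IsPreconnected (A : Set (GL (Fin N) K))) (hdiag : A ≤ diagGL.range)
    (hnorm : ∀ a ∈ A, ∀ h ∈ H, a * h * a⁻¹ ∈ H)
    (hT : T.relIndex (H ⊓ Subgroup.centralizer A) ≠ 0) (hTS : T ≤ S) (hSH : S ≤ H)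
    (hSB : S ≤ borelSubgroup (Fin N) K) {c : GL (Fin N) K}
    (hS : ∀ s ∈ S, c * s * c⁻¹ ∈ diagGL.range) :
    T.relIndex S ≠ 0 := by
  obtain ⟨m, hm, hmA⟩ := exists_weights_forall_diagGL_zpow_mem hA hconn hdiag
  let B := borelSubgroup (Fin N) K
  rw [← Subgroup.relIndex_subgroupOf hSB]
  refine relIndex_ne_zero_of_map_le_map diagUnits (F := (H ⊓ Subgroup.centralizer A).subgroupOf B)
    (Subgroup.comap_mono hTS) ?_ ?_ (Subgroup.relIndex_comap_ne_zero B.subtype hT)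
  · intro s hs t ht hst
    refine eq_of_inv_mul_eq_one (eq_one_of_diagUnits_eq_one_of_conj_mem_range_diagGL (c := c)
      (by rw [map_mul, map_inv, hst, inv_mul_cancel]) (hS _ (mul_mem (inv_mem hs) ht)))
  · rintro _ ⟨s, hs, rfl⟩
    obtain ⟨f, hf, hfs, hf0⟩ := exists_mem_diagUnits_eq_forall_apply_eq_zero
      (fun r g hg ↦ hnorm _ (hmA r) g hg) s (hSH hs)
    refine ⟨f, ⟨hf, Subgroup.mem_centralizer_iff.2 fun a ha ↦ ?_⟩, hfs⟩
    obtain ⟨d, rfl⟩ := hdiag ha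
    ext i j
    by_cases hij : m i = m j
    · simp [hm i j hij d ha, mul_comm]
    · simp [hf0 i j hij]

end Rigidity

section Torus

open Pointwise DoubleCoset

attribute [local instance] zTop

variable {K : Type*} [Field K] {N : ℕ}

lemma isClosed_borelSubgroup : IsClosed (borelSubgroup (Fin N) K : Set (GL (Fin N) K)) := by
  have : (borelSubgroup (Fin N) K : Set (GL (Fin N) K)) =
      ⋂ (i) (j) (_ : j < i), {g | g.val i j = 0} := by
    ext g
    simp only [Set.mem_iInter, Set.mem_ofPred]
    exact ⟨fun hg i j hij ↦ hg hij, fun hg i j hij ↦ hg i j hij⟩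
  rw [this]
  exact isClosed_iInter fun i ↦ isClosed_iInter fun j ↦ isClosed_iInter fun _ ↦
    isClosed_setOf_eq_of_mem_regularFunctions (glCoords_mem_regularFunctions (.inl (i, j)))
      (zero_mem _)

variable {A H T T' : Subgroup (GL (Fin N) K)}

lemma IsTorus.exists_conj_smul_le (hT : IsTorus K N T) :
    ∃ c : GL (Fin N) K, MulAut.conj c • T ≤ diagGL.range := by
  obtain ⟨c, hc⟩ := hT.2.2
  refine ⟨c, ?_⟩
  rintro _ ⟨t, ht, rfl⟩
  exact isDiag_iff_mem_range_diagGL.1 (hc t ht)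

lemma IsTorus.le_centralizer (hT : IsTorus K N T) : T ≤ Subgroup.centralizer T := by
  obtain ⟨c, hc⟩ := hT.exists_conj_smul_le
  intro t ht
  refine Subgroup.mem_centralizer_iff.2 fun s hs ↦ ?_
  obtain ⟨d, hd⟩ := hc (Subgroup.smul_mem_pointwise_smul t _ T ht)
  obtain ⟨e, he⟩ := hc (Subgroup.smul_mem_pointwise_smul s _ T hs)
  refine (MulAut.conj c).injective ?_
  calc
    MulAut.conj c (s * t) = diagGL e * diagGL d := by rw [map_mul, hd, he]; rfl
    _ = diagGL d * diagGL e := by rw [← map_mul, mul_comm, map_mul]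
    _ = MulAut.conj c (t * s) := by rw [map_mul, hd, he]; rfl

lemma IsTorus.isClosed (hT : IsTorus K N T) : IsClosed (T : Set (GL (Fin N) K)) :=
  zClosed_iff_isClosed.1 hT.1

variable [IsAlgClosed K]

-- Borel's fixed point theorem for the action of a torus on the flag variety `GL_N / B`.
lemma IsTorus.exists_mem_conj_smul_le_range_diagGL (hA : IsTorus K N A)
    {Y : Set (GL (Fin N) K)} (hY : IsClosed Y) (hne : Y.Nonempty)
    (hinv : IsBiinvariant A (borelSubgroup (Fin N) K) Y) :
    ∃ y ∈ Y, MulAut.conj y⁻¹ • A ≤ diagGL.range := by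
  obtain ⟨c, hc⟩ := hA.exists_conj_smul_le
  have hcY : IsClosed ((c⁻¹ * ·) ⁻¹' Y) := hY.preimage (by fun_prop)
  obtain ⟨y, hy, hyA⟩ := exists_mem_forall_inv_mul_mul_mem_range_diagGL
    (isClosed_conj_smul hA.isClosed c) (isPreconnected_conj_smul hA.2.1 c) hc hcY
    (hne.preimage (mul_left_surjective c⁻¹)) <| by
      rintro _ ⟨a, ha, rfl⟩ b hb y hy
      simpa [mul_assoc, MulAut.smul_def] using hinv a ha b hb _ hy
  refine ⟨c⁻¹ * y, hy, ?_⟩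
  rintro _ ⟨a, ha, rfl⟩
  simpa [mul_assoc, MulAut.smul_def] using
    hyA _ (Subgroup.smul_mem_pointwise_smul a (MulAut.conj c) A ha)

lemma IsTorus.exists_conj_smul_le_borelSubgroup (hA : IsTorus K N A) (hT : IsTorus K N T)
    (hTH : T ≤ H) (hH : IsClosed (H : Set (GL (Fin N) K)))
    (hnorm : ∀ a ∈ A, ∀ h ∈ H, a * h * a⁻¹ ∈ H) :
    ∃ g : GL (Fin N) K, ∃ h ∈ H, MulAut.conj g • A ≤ diagGL.range ∧
      MulAut.conj (g * h) • T ≤ borelSubgroup (Fin N) K := by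
  obtain ⟨Y, hY, hne, hinv, hmin⟩ :=
    exists_isBiinvariant_forall_isLocallyClosed_eq (A ⊔ H) (borelSubgroup (Fin N) K)
  obtain ⟨x, hx, hxA⟩ := hA.exists_mem_conj_smul_le_range_diagGL hY hne
    fun a ha ↦ hinv a (le_sup_left (a := A) ha)
  obtain ⟨y, hy, hyT⟩ := hT.exists_mem_conj_smul_le_range_diagGL hY hne
    fun t ht ↦ hinv t (le_sup_right (a := A) (hTH ht))
  have hO : doubleCoset x (H : Set _) (borelSubgroup (Fin N) K) = Y := by
    refine hmin _ ?_ ⟨x, mem_doubleCoset_self _ _ x⟩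
      (isLocallyClosed_doubleCoset_of_isClosed hH isClosed_borelSubgroup x) ?_
    · exact IsBiinvariant.doubleCoset_subset (fun h hh ↦ hinv h (le_sup_right (a := A) hh)) hx
    · refine .sup ?_ (isBiinvariant_doubleCoset x)
      intro a ha b hb _ hy
      obtain ⟨h, hh, b', hb', rfl⟩ := mem_doubleCoset.1 hy
      obtain ⟨d, hd⟩ := hxA (Subgroup.smul_mem_pointwise_smul a _ A ha)
      have hab : x⁻¹ * a * x ∈ borelSubgroup (Fin N) K := by
        simpa [hd, MulAut.smul_def] using diagGL_mem_borelSubgroup d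
      exact mem_doubleCoset.2 ⟨_, hnorm a ha h hh, _, mul_mem (mul_mem hab hb') hb, by group⟩
  rw [← hO] at hy
  obtain ⟨h, hh, b, hb, rfl⟩ := mem_doubleCoset.1 hy
  refine ⟨x⁻¹, h⁻¹, inv_mem hh, hxA, ?_⟩
  rintro _ ⟨t, ht, rfl⟩
  obtain ⟨d, hd⟩ := hyT (Subgroup.smul_mem_pointwise_smul t _ T ht)
  have := mul_mem (mul_mem hb (diagGL_mem_borelSubgroup d)) (inv_mem hb)
  simpa [hd, MulAut.smul_def, mul_assoc] using this

lemma IsTorus.relIndex_ne_zero (hA : IsTorus K N A) (hT' : IsTorus K N T')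
    (hH : IsClosed (H : Set (GL (Fin N) K))) (hnorm : ∀ a ∈ A, ∀ h ∈ H, a * h * a⁻¹ ∈ H)
    (hTT' : T ≤ T') (hT'H : T' ≤ H) (hHT : H ≤ Subgroup.centralizer T)
    (hT : T.relIndex (H ⊓ Subgroup.centralizer A) ≠ 0) :
    T.relIndex T' ≠ 0 := by
  obtain ⟨g, h, hh, hgA, hgT'⟩ := hA.exists_conj_smul_le_borelSubgroup hT' hT'H hH hnorm
  obtain ⟨c, hc⟩ := hT'.exists_conj_smul_le
  have hhT : MulAut.conj h • T = T :=
    Subgroup.mem_normalizer_iff_map_conj_eq.1 (Subgroup.centralizer_le_normalizer _ (hHT hh))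
  have hhH : MulAut.conj h • H = H := Subgroup.conj_smul_eq_self_of_mem hh
  rw [← Subgroup.relIndex_pointwise_smul (MulAut.conj g), Subgroup.smul_inf,
    smul_centralizer] at hT
  have hgT : MulAut.conj (g * h) • T = MulAut.conj g • T := by rw [map_mul, mul_smul, hhT]
  have hgH : MulAut.conj (g * h) • H = MulAut.conj g • H := by rw [map_mul, mul_smul, hhH]
  rw [← Subgroup.relIndex_pointwise_smul (MulAut.conj (g * h)), hgT]
  refine relIndex_ne_zero_of_le_borelSubgroup (isClosed_conj_smul hA.isClosed g)
    (isPreconnected_conj_smul hA.2.1 g) hgA ?_ hT ?_ ?_ hgT' (c := c * (g * h)⁻¹) ?_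
  · rintro _ ⟨a, ha, rfl⟩ _ ⟨x, hx, rfl⟩
    exact ⟨_, hnorm a ha x hx, by simp⟩
  · rw [← hgT]; exact Subgroup.pointwise_smul_le_pointwise_smul_iff.2 hTT'
  · rw [← hgH]; exact Subgroup.pointwise_smul_le_pointwise_smul_iff.2 hT'H
  · rintro _ ⟨t, ht, rfl⟩
    have := hc (Subgroup.smul_mem_pointwise_smul t _ T' ht)
    simpa [MulAut.smul_def, mul_assoc] using this

theorem isMaximalTorus_of_fixedPoints_general (hH : IsClosed (H : Set (GL (Fin N) K)))
    (hA : IsTorus K N A) (hT : IsClosed (T : Set (GL (Fin N) K)))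
    (hnorm : ∀ a ∈ A, ∀ h ∈ H, a * h * a⁻¹ ∈ H) (hcent : ∀ a ∈ A, ∀ t ∈ T, a * t = t * a)
    (hfix : connectedComponentIn {h | h ∈ H ∧ ∀ a ∈ A, ∀ t ∈ T, (a * t) * h * (a * t)⁻¹ = h} 1 ⊆
      T)
    (hT' : IsTorus K N T') (hT'H : T' ≤ H) (hTT' : T ≤ T') : T' = T := by
  rw [← coe_inf_centralizer_inf_centralizer] at hfix
  have hT'C : T' ≤ Subgroup.centralizer T :=
    hT'.le_centralizer.trans (Subgroup.centralizer_le hTT')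
  have hnormC : ∀ a ∈ A, ∀ h ∈ H ⊓ Subgroup.centralizer T,
      a * h * a⁻¹ ∈ H ⊓ Subgroup.centralizer T := by
    refine fun a ha h hh ↦ Subgroup.mem_inf.2 ⟨hnorm a ha h hh.1, ?_⟩
    have haC : a ∈ Subgroup.centralizer T := fun t ht ↦ (hcent a ha t ht).symm
    exact mul_mem (mul_mem haC hh.2) (inv_mem haC)
  have hindex : T.relIndex T' ≠ 0 := hA.relIndex_ne_zero hT' (hH.inter (isClosed_centralizer _))
    hnormC hTT' (le_inf hT'H hT'C) inf_le_right
    (relIndex_ne_zero_of_connectedComponentIn_subset hfix)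
  exact (le_of_isPreconnected_of_isClosed_of_relIndex_ne_zero hT'.2.1 hT hindex).antisymm hTT'

end Torus

/-- Recognizing maximal tori in the presence of a suitable torus action:
if a torus `A` acts on the linear algebraic group `H` (here: `A` normalizes
`H` inside a common `GL_N`, with `A ∩ H = 1`, forming `A ⋉ H`), `T` is a torus
of `H` centralized by `A`, and the identity component of the fixed point group
`H^{A×T}` of the conjugation action of `A × T` on `H` equals `T`, then `T` is
a maximal torus of `H`. -/
theorem isMaximalTorus_of_fixedPoints
    (H A T : Subgroup (GL (Fin N) k))
    (hH : ZClosed k N (H : Set (GL (Fin N) k)))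
    (hA : IsTorus k N A) (hT : IsTorus k N T) (hTH : T ≤ H)
    (hnorm : ∀ a ∈ A, ∀ h ∈ H, a * h * a⁻¹ ∈ H)
    (hdisj : A ⊓ H = ⊥)
    (hcent : ∀ a ∈ A, ∀ t ∈ T, a * t = t * a)
    (hfix : Subtype.val '' (@connectedComponent
        {h : GL (Fin N) k // h ∈ H ∧ ∀ a ∈ A, ∀ t ∈ T, (a * t) * h * (a * t)⁻¹ = h}
        (TopologicalSpace.induced Subtype.val (zTop k N))
        ⟨1, H.one_mem, fun a _ t _ => by group⟩) = (T : Set (GL (Fin N) k))) :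
    ∀ T' : Subgroup (GL (Fin N) k), IsTorus k N T' → T' ≤ H → T ≤ T' → T' = T := by
  let := zTop k N
  exact fun T' hT' hT'H hTT' ↦ isMaximalTorus_of_fixedPoints_general (zClosed_iff_isClosed.1 hH) hA
    hT.isClosed hnorm hcent ((connectedComponentIn_eq_image _).trans hfix).subset hT' hT'H hTT'
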